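/- arXiv:1612.08690 — 2 statements merged into one kernel-verified Lean document; each statement's English description precedes it below -/
import Mathlib

section
/- Suppose g ≥ 1 is odd and 0 ≤ j ≤ (g−1)/2. Then there exists a positive rational number c such that β₋^{j+(g−1)/2} β₊^{g−1} ζ_{g−2j−1} − c·γ^{g−1} lies in the ideal J_g of ℂ[α,β,γ]; that is, β₋^{j+(g−1)/2} β₊^{g−1} ζ_{g−2j−1} is equivalent modulo J_g to a positive rational multiple of γ^{g−1}. -/
open MvPolynomial

/-- ζ_k ∈ ℂ[α,β,γ] (variables: X 0 = α, X 1 = β, X 2 = γ). -/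
noncomputable def zeta : ℕ → MvPolynomial (Fin 3) ℂ
  | 0 => 1
  | 1 => X 0
  | 2 => X 0 * zeta 1 + (X 1 - C 8) * zeta 0
  | (n + 3) =>
      X 0 * zeta (n + 2)
        + C (((n : ℂ) + 2) ^ 2) * (X 1 + C ((-1) ^ (n + 2) * 8)) * zeta (n + 1)
        + C (2 * ((n : ℂ) + 2) * ((n : ℂ) + 1)) * X 2 * zeta n

/-- J_g = (ζ_g, ζ_{g+1}, ζ_{g+2}) ⊆ ℂ[α,β,γ]. -/
noncomputable def J (g : ℕ) : Ideal (MvPolynomial (Fin 3) ℂ) :=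
  Ideal.span {zeta g, zeta (g + 1), zeta (g + 2)}

/-- β₋ = β − 8. -/
noncomputable def betaM : MvPolynomial (Fin 3) ℂ := X 1 - C 8

/-- β₊ = β + 8. -/
noncomputable def betaP : MvPolynomial (Fin 3) ℂ := X 1 + C 8

/-- β + (-1)^n 8. -/
noncomputable def bb (n : ℕ) : MvPolynomial (Fin 3) ℂ := X 1 + C ((-1) ^ n * 8)

/-- Alternating product of β₊ and β₋. -/
noncomputable def BB : ℕ → MvPolynomial (Fin 3) ℂ
  | 0 => 1
  | n + 1 => BB n * bb n

/-- `f` is equivalent to `c γ^d` modulo `J (d+1)`. -/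
def EE (d : ℕ) (f : MvPolynomial (Fin 3) ℂ) (c : ℚ) : Prop :=
  f - C (c : ℂ) * (X 2 : MvPolynomial (Fin 3) ℂ) ^ d ∈ J (d + 1)

lemma zeta_rec (m : ℕ) : zeta (m + 2) = X 0 * zeta (m + 1)
    + C (((m : ℂ) + 1) ^ 2) * bb (m + 1) * zeta m
    + C (2 * ((m : ℂ) + 1) * (m : ℂ)) * X 2 * zeta (m - 1) := by
  cases m with
  | zero => simp [zeta, bb, sub_eq_add_neg]
  | succ n =>
    rw [zeta]
    simp only [bb, Nat.add_sub_cancel]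
    push_cast
    ring_nf

lemma zeta_mem0 (g : ℕ) : zeta g ∈ J g := Ideal.subset_span (by simp)
lemma zeta_mem1 (g : ℕ) : zeta (g + 1) ∈ J g := Ideal.subset_span (by simp)
lemma zeta_mem2 (g : ℕ) : zeta (g + 2) ∈ J g := Ideal.subset_span (by simp)

lemma C_cancel {I : Ideal (MvPolynomial (Fin 3) ℂ)} {q : ℂ} (hq : q ≠ 0)
    {f : MvPolynomial (Fin 3) ℂ} (h : C q * f ∈ I) : f ∈ I := by
  have := I.mul_mem_left (C q⁻¹) h
  rwa [← mul_assoc, ← C_mul, inv_mul_cancel₀ hq, C_1, one_mul] at this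

lemma gamma_zeta_mem (g : ℕ) : X 2 * zeta g ∈ J (g + 1) := by
  have h := zeta_rec (g + 1)
  have h2 : C (2 * (((g + 1 : ℕ) : ℂ) + 1) * ((g + 1 : ℕ) : ℂ)) * (X 2 * zeta g) ∈ J (g + 1) := by
    have e : C (2 * (((g + 1 : ℕ) : ℂ) + 1) * ((g + 1 : ℕ) : ℂ)) * (X 2 * zeta g)
      = zeta (g + 1 + 2) - X 0 * zeta (g + 1 + 1)
        - C ((((g + 1 : ℕ) : ℂ) + 1) ^ 2) * bb (g + 1 + 1) * zeta (g + 1) := by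
      rw [h, Nat.add_sub_cancel]; ring
    rw [e]
    exact (J (g+1)).sub_mem ((J (g+1)).sub_mem (zeta_mem2 _)
      ((J (g+1)).mul_mem_left _ (zeta_mem1 _))) ((J (g+1)).mul_mem_left _ (zeta_mem0 _))
  refine C_cancel ?_ h2
  have : ((g + 1 : ℕ) : ℂ) + 1 ≠ 0 := Nat.cast_add_one_ne_zero _
  have h3 : ((g + 1 : ℕ) : ℂ) ≠ 0 := Nat.cast_ne_zero.2 (Nat.succ_ne_zero g)
  simp only [ne_eq, mul_eq_zero, not_or]
  exact ⟨⟨two_ne_zero, this⟩, h3⟩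

lemma gamma_mul_mem {g : ℕ} {f : MvPolynomial (Fin 3) ℂ} (h : f ∈ J g) :
    X 2 * f ∈ J (g + 1) := by
  have : J g ≤ Submodule.comap (LinearMap.mulLeft (MvPolynomial (Fin 3) ℂ) (X 2)) (J (g + 1)) := by
    refine Ideal.span_le.2 ?_
    rintro x (rfl | rfl | rfl)
    · exact gamma_zeta_mem g
    · exact (J (g + 1)).mul_mem_left _ (zeta_mem0 _)
    · exact (J (g + 1)).mul_mem_left _ (zeta_mem1 _)
  exact this h

lemma alpha_gamma (d : ℕ) : X 0 * (X 2 : MvPolynomial (Fin 3) ℂ) ^ d ∈ J (d + 1) := by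
  induction d with
  | zero => simpa [zeta] using zeta_mem0 1
  | succ d ih => 
    have := gamma_mul_mem ih
    convert this using 1; ring

lemma beta_gamma (d : ℕ) : (X 1 - C 8) * (X 2 : MvPolynomial (Fin 3) ℂ) ^ d ∈ J (d + 1) := by
  induction d with
  | zero =>
    have h : (X 1 - C 8 : MvPolynomial (Fin 3) ℂ) = zeta 2 - X 0 * zeta 1 := by
      simp [zeta]
    rw [pow_zero, mul_one, h]
    exact (J 1).sub_mem (zeta_mem1 1) ((J 1).mul_mem_left _ (zeta_mem0 1))
  | succ d ih =>
    have := gamma_mul_mem ih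
    convert this using 1; ring

namespace EE
variable {d : ℕ} {f g : MvPolynomial (Fin 3) ℂ} {a b : ℚ}

lemma of_mem (h : f ∈ J (d + 1)) : EE d f 0 := by simpa [EE] using h

lemma sub (hf : EE d f a) (hg : EE d g b) : EE d (f - g) (a - b) := by
  unfold EE at *
  convert (J (d+1)).sub_mem hf hg using 1
  push_cast
  rw [C_sub]; ring

lemma smul (q : ℚ) (hf : EE d f a) : EE d (C (q : ℂ) * f) (q * a) := by
  unfold EE at *
  convert (J (d+1)).mul_mem_left (C (q : ℂ)) hf using 1
  push_cast
  rw [C_mul]; ring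

lemma alpha (hf : EE d f a) : EE d (X 0 * f) 0 := by
  refine of_mem ?_
  unfold EE at *
  convert (J (d+1)).add_mem ((J (d+1)).mul_mem_left (X 0) hf)
    ((J (d+1)).mul_mem_left (C (a : ℂ)) (alpha_gamma d)) using 1
  ring

lemma gamma (hf : EE d f a) : EE (d + 1) (X 2 * f) a := by
  unfold EE at *
  convert gamma_mul_mem hf using 1
  ring

lemma beta (n : ℕ) (hf : EE d f a) : EE d (f * bb n) (a * (8 + (-1) ^ n * 8)) := by
  unfold EE at *
  convert (J (d+1)).add_mem ((J (d+1)).mul_mem_left (bb n) hf)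
    ((J (d+1)).mul_mem_left (C (a : ℂ)) (beta_gamma d)) using 1
  simp only [bb]
  push_cast
  simp only [C_mul, C_add]
  ring

lemma cancel {q : ℚ} (hq : q ≠ 0) (h : EE d (C (q : ℂ) * f) (q * a)) : EE d f a := by
  unfold EE at *
  refine C_cancel (q := (q : ℂ)) (by exact_mod_cast hq) ?_
  convert h using 1
  push_cast
  rw [C_mul]; ring

end EE

lemma bb_congr {m n : ℕ} (h : Even m ↔ Even n) : bb m = bb n := by
  unfold bb
  rcases Nat.even_or_odd m with hm | hm
  · rw [hm.neg_one_pow, (h.1 hm).neg_one_pow]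
  · have : Odd n := by rw [← Nat.not_even_iff_odd] at *; tauto
    rw [hm.neg_one_pow, this.neg_one_pow]

lemma main_ind (n : ℕ) : ∀ m i : ℕ, m + 2 * i = n → ∃ c : ℚ,
    (Even i → Even m → 0 < c) ∧ (Even i → Odd m → c < 0) ∧
      EE (m + i) (BB n * zeta m) c := by
  induction n using Nat.strong_induction_on with
  | _ n ih =>
  intro m i hmi
  cases n with
  | zero =>
    obtain rfl : m = 0 := by omega
    obtain rfl : i = 0 := by omega
    refine ⟨1, by simp, by simp, ?_⟩
    simp [EE, BB, zeta]
  | succ n =>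
    -- term with index m + 2
    have T1 : ∃ c : ℚ, (Even i → Even m → 0 ≤ c) ∧ (Even i → m = 0 → 0 < c) ∧
        (Even i → Odd m → c ≤ 0) ∧ EE (m + i) (BB n * zeta (m + 2)) c := by
      match i, hmi with
      | 0, hmi =>
        refine ⟨0, by simp, fun _ h => by omega, by simp, EE.of_mem ?_⟩
        exact (J _).mul_mem_left _ (zeta_mem1 (m + 1))
      | 1, hmi =>
        refine ⟨0, by simp, by simp, by simp, EE.of_mem ?_⟩
        exact (J _).mul_mem_left _ (zeta_mem0 (m + 2))
      | s + 2, hmi =>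
        obtain ⟨n, rfl⟩ : ∃ k, n = k + 1 := ⟨n - 1, by omega⟩
        obtain ⟨c, h1, h2, h3⟩ := ih n (by omega) (m + 2) s (by omega)
        have e1 : Even (s + 2) → Even s := fun h => by simpa [Nat.even_add] using h
        have hnn : (0 : ℚ) ≤ 8 + (-1) ^ n * 8 := by
          rcases neg_one_pow_eq_or ℚ n with h | h <;> rw [h] <;> norm_num
        refine ⟨c * (8 + (-1) ^ n * 8), ?_, ?_, ?_, ?_⟩
        · intro hi hm
          exact mul_nonneg (h1 (e1 hi) (by simpa [Nat.even_add] using hm)).le hnn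
        · intro hi hm
          have hn : Even n := ⟨s + 1, by omega⟩
          rw [hn.neg_one_pow]
          have := h1 (e1 hi) (by simp [hm])
          linarith
        · intro hi hm
          exact mul_nonpos_of_nonpos_of_nonneg (h2 (e1 hi) (by
            simpa [Nat.odd_add] using hm)).le hnn
        · have := h3.beta n
          rw [show m + 2 + s = m + (s + 2) by ring] at this
          convert this using 1
          rw [BB]; ring
    have T2 : EE (m + i) (X 0 * (BB n * zeta (m + 1))) 0 := by
      match i, hmi with
      | 0, hmi =>
        refine EE.of_mem ?_
        exact (J _).mul_mem_left _ ((J _).mul_mem_left _ (zeta_mem0 (m + 1)))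
      | s + 1, hmi =>
        obtain ⟨c, h1, h2, h3⟩ := ih n (by omega) (m + 1) s (by omega)
        have := h3.alpha
        rwa [show m + 1 + s = m + (s + 1) by ring] at this
    have T3 : ∃ c : ℚ, (m = 0 → c = 0) ∧ (Even i → Even m → m ≠ 0 → c < 0) ∧
        (Even i → Odd m → 0 < c) ∧
        EE (m + i) (C ((m : ℚ) : ℂ) * (X 2 * (BB n * zeta (m - 1)))) c := by
      match m, hmi with
      | 0, hmi =>
        refine ⟨0, by simp, by simp, by simp, EE.of_mem (by simp)⟩
      | m + 1, hmi =>
        obtain ⟨c, h1, h2, h3⟩ := ih n (by omega) m i (by omega)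
        have hp : (0 : ℚ) < ((m + 1 : ℕ) : ℚ) := by positivity
        refine ⟨((m + 1 : ℕ) : ℚ) * c, by simp, ?_, ?_, ?_⟩
        · intro hi hm _
          exact mul_neg_of_pos_of_neg hp (h2 hi (by
            simpa [Nat.even_add_one] using hm))
        · intro hi hm
          exact mul_pos hp (h1 hi (by
            simpa [Nat.odd_add_one] using hm))
        · have := (h3.gamma).smul ((m + 1 : ℕ) : ℚ)
          rw [show m + i + 1 = m + 1 + i by ring] at this
          exact this
    obtain ⟨c1, p1, p2, p3, h1⟩ := T1
    obtain ⟨c3, q0, q1, q2, h3⟩ := T3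
    have hm0 : (0 : ℚ) < (m : ℚ) + 1 := by positivity
    have hq : (0 : ℚ) < ((m : ℚ) + 1) ^ 2 := by positivity
    refine ⟨(c1 - 0 - 2 * ((m : ℚ) + 1) * c3) / ((m : ℚ) + 1) ^ 2, ?_, ?_, ?_⟩
    · intro hi hm
      refine div_pos ?_ hq
      by_cases h0 : m = 0
      · subst h0
        have := p2 hi rfl
        rw [q0 rfl]; linarith
      · have := p1 hi hm
        have := mul_neg_of_pos_of_neg hm0 (q1 hi hm h0)
        linarith
    · intro hi hm
      refine div_neg_of_neg_of_pos ?_ hq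
      have := p3 hi hm
      have := mul_pos hm0 (q2 hi hm)
      linarith
    · refine EE.cancel hq.ne' ?_
      rw [mul_div_cancel₀ _ hq.ne']
      have := (h1.sub T2).sub (h3.smul (2 * ((m : ℚ) + 1)))
      convert this using 1
      rw [zeta_rec m, BB, bb_congr (m := m + 1) (n := n)]
      · push_cast
        have e : (C (2 * ((m : ℂ) + 1) * (m : ℂ)) : MvPolynomial (Fin 3) ℂ)
          = C (2 * ((m : ℂ) + 1)) * C (m : ℂ) := C_mul
        rw [e]
        generalize (C (2 * ((m : ℂ) + 1)) : MvPolynomial (Fin 3) ℂ) = u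
        generalize (C (m : ℂ) : MvPolynomial (Fin 3) ℂ) = v
        generalize (C (((m : ℂ) + 1) ^ 2) : MvPolynomial (Fin 3) ℂ) = w
        ring
      · rw [Nat.even_iff, Nat.even_iff]; omega

lemma BB_even (n : ℕ) : BB (2 * n) = betaM ^ n * betaP ^ n := by
  induction n with
  | zero => simp [BB]
  | succ n ih =>
    rw [show 2 * (n + 1) = 2 * n + 1 + 1 by ring, BB, BB, ih]
    have h1 : bb (2 * n) = betaP := by simp [bb, betaP]
    have h2 : bb (2 * n + 1) = betaM := by simp [bb, betaM, pow_succ, sub_eq_add_neg]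
    rw [h1, h2]; ring

lemma EE_betaP {d : ℕ} {f : MvPolynomial (Fin 3) ℂ} {c : ℚ} (h : EE d f c) (r : ℕ) :
    EE d (f * betaP ^ r) (c * 16 ^ r) := by
  induction r with
  | zero => simpa using h
  | succ r ih =>
    have := ih.beta 0
    convert this using 1
    · simp [bb, betaP]; ring
    · norm_num; ring

/-- For g odd and j ≤ (g−1)/2, the element β₋^{j+(g−1)/2} β₊^{g−1} ζ_{g−2j−1} is
    equivalent modulo J_g to a positive rational multiple of γ^{g−1}. -/
theorem betaM_betaP_zeta_equiv_gamma_pow (g j : ℕ) (hg : 1 ≤ g) (hodd : Odd g)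
    (hj : j ≤ (g - 1) / 2) :
    ∃ c : ℚ, 0 < c ∧
      betaM ^ (j + (g - 1) / 2) * betaP ^ (g - 1) * zeta (g - 2 * j - 1)
        - C (c : ℂ) * (X 2 : MvPolynomial (Fin 3) ℂ) ^ (g - 1) ∈ J g := by
  obtain ⟨k, rfl⟩ := hodd
  have hjk : j ≤ k := by omega
  obtain ⟨r, rfl⟩ := Nat.exists_eq_add_of_le hjk
  obtain ⟨c, h1, -, h3⟩ := main_ind (2 * (j + (j + r))) (2 * r) (2 * j) (by ring)
  refine ⟨c * 16 ^ r, mul_pos (h1 (by simp) (by simp)) (by positivity), ?_⟩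
  have := EE_betaP h3 r
  rw [BB_even] at this
  unfold EE at this
  rw [show (2 * (j + r) + 1 - 1) / 2 = j + r by omega,
    show 2 * (j + r) + 1 - 1 = 2 * r + 2 * j by omega,
    show 2 * (j + r) + 1 - 2 * j - 1 = 2 * r by omega,
    show 2 * (j + r) + 1 = 2 * r + 2 * j + 1 by ring]
  convert this using 2
  ring
end

section
/- For g ≥ 0 even and i ≥ 0 the following hold: (i) there exists w ∈ ℂ[α,γ] which is a unit modulo J_g^+ such that w·γ^i ζ_{g−2i−1}^+ ≡ γ^{i+1} ζ_{g−2i−2}^+ (mod J_g^+); (ii) there exists x ∈ ℂ[α,γ] which is a unit modulo J_g^+ such that α·x·γ^i ζ_{g−2i−1}^+ ≡ γ^{i+1} ζ_{g−2i−3}^+ (mod J_g^+) if i is even, and x·γ^i ζ_{g−2i−1}^+ ≡ α·γ^{i+1} ζ_{g−2i−3}^+ (mod J_g^+) if i is odd. -/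
open MvPolynomial

/-- ζ_k^+ ∈ ℂ[α,γ] (variables: X 0 = α, X 1 = γ):
    ζ_{k+1}^+ = α ζ_k^+ + 16k² ζ_{k−1}^+ + 2k(k−1) γ ζ_{k−2}^+ for k even, and
    ζ_{k+1}^+ = α ζ_k^+ + 2k(k−1) γ ζ_{k−2}^+ for k odd. -/
noncomputable def zp : ℕ → MvPolynomial (Fin 2) ℂ
  | 0 => 1
  | 1 => X 0
  | 2 => X 0 * zp 1
  | (n + 3) =>
      if n % 2 = 0 then
        X 0 * zp (n + 2) + C (16 * ((n : ℂ) + 2) ^ 2) * zp (n + 1)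
          + C (2 * ((n : ℂ) + 2) * ((n : ℂ) + 1)) * X 1 * zp n
      else
        X 0 * zp (n + 2) + C (2 * ((n : ℂ) + 2) * ((n : ℂ) + 1)) * X 1 * zp n

/-- ζ_k^+ for an integer index k, with ζ_k^+ = 0 for k < 0. -/
noncomputable def zpZ (k : ℤ) : MvPolynomial (Fin 2) ℂ :=
  if k < 0 then 0 else zp k.toNat

/-- J_g^+ = (ζ_g^+, ζ_{g+1}^+, ζ_{g+2}^+) ⊆ ℂ[α,γ], for a natural number g. -/
noncomputable def Jp (g : ℕ) : Ideal (MvPolynomial (Fin 2) ℂ) :=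
  Ideal.span {zp g, zp (g + 1), zp (g + 2)}


section Abs

variable {A : Type*} [CommRing A] [Algebra ℂ A]

/-- positive real value at every complex point -/
def PosPt (e : A) : Prop := ∀ φ : A →ₐ[ℂ] ℂ, ∃ r : ℝ, 0 < r ∧ φ e = (r : ℂ)

/-- nonnegative real value at every complex point -/
def NonnegPt (e : A) : Prop := ∀ φ : A →ₐ[ℂ] ℂ, ∃ r : ℝ, 0 ≤ r ∧ φ e = (r : ℂ)

theorem PosPt.mul {a b : A} (ha : PosPt a) (hb : PosPt b) : PosPt (a * b) := by
  intro φ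
  obtain ⟨r, hr, h1⟩ := ha φ
  obtain ⟨s, hs, h2⟩ := hb φ
  exact ⟨r * s, mul_pos hr hs, by simp [h1, h2]⟩

theorem PosPt.nonneg {a : A} (ha : PosPt a) : NonnegPt a := by
  intro φ
  obtain ⟨r, hr, h1⟩ := ha φ
  exact ⟨r, hr.le, h1⟩

theorem NonnegPt.mul {a b : A} (ha : NonnegPt a) (hb : NonnegPt b) : NonnegPt (a * b) := by
  intro φ
  obtain ⟨r, hr, h1⟩ := ha φ
  obtain ⟨s, hs, h2⟩ := hb φ
  exact ⟨r * s, mul_nonneg hr hs, by simp [h1, h2]⟩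

theorem PosPt.add {a b : A} (ha : PosPt a) (hb : NonnegPt b) : PosPt (a + b) := by
  intro φ
  obtain ⟨r, hr, h1⟩ := ha φ
  obtain ⟨s, hs, h2⟩ := hb φ
  exact ⟨r + s, by linarith, by simp [h1, h2]⟩

theorem posPt_const {r : ℝ} (hr : 0 < r) : PosPt (algebraMap ℂ A (r : ℂ)) := by
  intro φ
  exact ⟨r, hr, by simp⟩

theorem posPt_one : PosPt (1 : A) := fun φ => ⟨1, one_pos, by simp⟩

theorem isUnit_of_points [Algebra.FiniteType ℂ A] {e : A}
    (h : ∀ φ : A →ₐ[ℂ] ℂ, φ e ≠ 0) : IsUnit e := by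
  by_contra hne
  obtain ⟨m, hm, hem⟩ := exists_max_ideal_of_mem_nonunits hne
  letI : Field (A ⧸ m) := Ideal.Quotient.field m
  haveI : Algebra.FiniteType ℂ (A ⧸ m) :=
    Algebra.FiniteType.of_surjective (Ideal.Quotient.mkₐ ℂ m) (Ideal.Quotient.mkₐ_surjective ℂ m)
  haveI : Module.Finite ℂ (A ⧸ m) := finite_of_finite_type_of_isJacobsonRing ℂ (A ⧸ m)
  have hb : Function.Bijective (algebraMap ℂ (A ⧸ m)) :=
    IsAlgClosed.algebraMap_bijective_of_isIntegral
  let ψ : ℂ ≃ₐ[ℂ] (A ⧸ m) := AlgEquiv.ofBijective (Algebra.ofId ℂ (A ⧸ m)) hb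
  refine h ((ψ.symm : (A ⧸ m) →ₐ[ℂ] ℂ).comp (Ideal.Quotient.mkₐ ℂ m)) ?_
  have : Ideal.Quotient.mk m e = 0 := Ideal.Quotient.eq_zero_iff_mem.mpr hem
  simp [this]

theorem PosPt.isUnit [Algebra.FiniteType ℂ A] {e : A} (h : PosPt e) : IsUnit e := by
  apply isUnit_of_points
  intro φ h0
  obtain ⟨r, hr, h1⟩ := h φ
  rw [h0] at h1
  exact hr.ne' (by exact_mod_cast h1.symm)

theorem PosPt.inv [Algebra.FiniteType ℂ A] {e : A} (h : PosPt e) :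
    ∃ f : A, PosPt f ∧ e * f = 1 := by
  obtain ⟨f, hf⟩ := h.isUnit.exists_right_inv
  refine ⟨f, ?_, hf⟩
  intro φ
  obtain ⟨r, hr, h1⟩ := h φ
  refine ⟨r⁻¹, inv_pos.mpr hr, ?_⟩
  have h2 := congrArg φ hf
  rw [map_mul, map_one, h1] at h2
  rw [Complex.ofReal_inv]
  exact eq_inv_of_mul_eq_one_right h2

theorem abs_induction [Algebra.FiniteType ℂ A] (α γ : A) (u v : ℕ → A) (n : ℕ)
    (hα : NonnegPt (-(α ^ 2))) (hγ : γ * u 0 = 0)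
    (e10 : ∃ c : A, PosPt c ∧ c * u 1 = -(α * u 0))
    (e20 : ∃ c d : A, PosPt c ∧ PosPt d ∧ c * v 0 = -(d * u 0))
    (e1 : ∀ i, i + 1 < n → ∃ c : A, PosPt c ∧ c * u (i + 2) = v i - α * u (i + 1))
    (e2 : ∀ i, i + 1 < n → ∃ c d : A, PosPt c ∧ PosPt d ∧
      c * v (i + 1) = γ * u i - α * v i - d * u (i + 1)) :
    ∀ i, i < n → γ * u i = 0 ∧ γ * u (i + 1) = 0 ∧ ∃ w x : A, PosPt w ∧ PosPt x ∧
      v i = -(w * u i) ∧ (Even i → u (i + 1) = -(α * x * u i)) ∧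
      (Odd i → x * u i = α * u (i + 1)) := by
  intro i
  induction i with
  | zero =>
    intro _
    obtain ⟨c, hc, h1⟩ := e10
    obtain ⟨c', d, hc', hd, h2⟩ := e20
    obtain ⟨f, hf, hcf⟩ := hc.inv
    obtain ⟨f', hf', hcf'⟩ := hc'.inv
    have hu1 : u 1 = -(α * f * u 0) := by linear_combination f * h1 - u 1 * hcf
    refine ⟨hγ, ?_, d * f', f, hd.mul hf', hf, ?_, fun _ => hu1, fun h => by simp at h⟩
    · rw [zero_add, hu1]; linear_combination -α * f * hγ
    · linear_combination f' * h2 - v 0 * hcf'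
  | succ i ih =>
    intro hi
    obtain ⟨g0, g1, w, x, hw, hx, hv, hE, hO⟩ := ih (by omega)
    obtain ⟨c, hc, h1⟩ := e1 i hi
    obtain ⟨c', d, hc', hd, h2⟩ := e2 i hi
    obtain ⟨f, hf, hcf⟩ := hc.inv
    obtain ⟨f', hf', hcf'⟩ := hc'.inv
    obtain ⟨y, hy, hxy⟩ := hx.inv
    have g2 : γ * u (i + 1 + 1) = 0 := by
      show γ * u (i + 2) = 0
      linear_combination γ * f * h1 - γ * u (i + 2) * hcf + γ * f * hv - w * f * g0 - α * f * g1
    refine ⟨g1, g2, ?_⟩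
    rcases Nat.even_or_odd i with hi | hi
    · have hu := hE hi
      have hr : α * v i = w * y * u (i + 1) := by
        linear_combination α * hv - w * y * hu + α * w * u i * hxy
      refine ⟨(w * y + d) * f', (w * y + -(α ^ 2)) * f, ((hw.mul hy).add hd.nonneg).mul hf',
        ((hw.mul hy).add hα).mul hf, ?_, ?_, ?_⟩
      · linear_combination f' * h2 - v (i + 1) * hcf' + f' * g0 - f' * hr
      · intro h; exact absurd h (by simpa [Nat.even_add_one] using hi)
      · intro _
        show _ = α * u (i + 2)
        linear_combination -α * f * h1 + α * u (i + 2) * hcf - f * hr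
    · have hu := hO hi
      have hr : v i = -(w * y * α * u (i + 1)) := by
        linear_combination hv - w * y * hu + w * u i * hxy
      refine ⟨(d + w * y * -(α ^ 2)) * f', (w * y + 1) * f,
        (hd.add ((hw.mul hy).nonneg.mul hα)).mul hf',
        ((hw.mul hy).add posPt_one.nonneg).mul hf, ?_, ?_, ?_⟩
      · linear_combination f' * h2 - v (i + 1) * hcf' + f' * g0 - α * f' * hr
      · intro _
        show u (i + 2) = _
        linear_combination f * h1 - u (i + 2) * hcf + f * hr
      · intro h
        exact absurd hi (by simpa [Nat.odd_add_one] using h)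

end Abs

theorem zpZ_nat (k : ℕ) (m : ℤ) (h : m = k) : zpZ m = zp k := by
  subst h; simp [zpZ]

theorem zpZ_neg (m : ℤ) (h : m < 0) : zpZ m = 0 := by simp [zpZ, h]

/-- uniform shape of the recursion -/
theorem zp_rec (n : ℕ) : ∃ c d : ℂ, d ≠ 0 ∧
    zp (n + 3) = X 0 * zp (n + 2) + C c * zp (n + 1) + C d * X 1 * zp n := by
  have hd : (2 * ((n : ℂ) + 2) * ((n : ℂ) + 1)) ≠ 0 := by
    have h1 : (n : ℂ) + 2 ≠ 0 := by exact_mod_cast (by omega : n + 2 ≠ 0)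
    have h2 : (n : ℂ) + 1 ≠ 0 := by exact_mod_cast (by omega : n + 1 ≠ 0)
    simp [h1, h2]
  by_cases h : n % 2 = 0
  · exact ⟨_, _, hd, by rw [zp, if_pos h]⟩
  · exact ⟨0, _, hd, by rw [zp, if_neg h]; simp⟩

theorem zp_A (j : ℕ) : ∃ c : ℝ, 0 < c ∧
    zpZ (2 * j + 2) = X 0 * zpZ (2 * j + 1) + C (c : ℂ) * X 1 * zpZ (2 * j - 1) := by
  rcases j with _ | j
  · refine ⟨1, one_pos, ?_⟩
    rw [zpZ_nat 2 _ (by simp), zpZ_nat 1 _ (by simp), zpZ_neg _ (by simp)]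
    simp [zp]
  · refine ⟨2 * ((2 * j + 1 : ℕ) + 2) * ((2 * j + 1 : ℕ) + 1), by positivity, ?_⟩
    rw [zpZ_nat (2 * j + 1 + 3) _ (by push_cast; ring), zpZ_nat (2 * j + 1 + 2) _ (by push_cast; ring),
      zpZ_nat (2 * j + 1) _ (by push_cast; ring), zp, if_neg (by omega)]
    push_cast
    rfl

theorem zp_B (j : ℕ) : ∃ c d : ℝ, 0 < c ∧ 0 < d ∧
    zpZ (2 * j + 3) = X 0 * zpZ (2 * j + 2) + C (d : ℂ) * zpZ (2 * j + 1)
      + C (c : ℂ) * X 1 * zpZ (2 * j) := by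
  refine ⟨2 * ((2 * j : ℕ) + 2) * ((2 * j : ℕ) + 1), 16 * ((2 * j : ℕ) + 2) ^ 2,
    by positivity, by positivity, ?_⟩
  rw [zpZ_nat (2 * j + 3) _ (by push_cast; ring), zpZ_nat (2 * j + 2) _ (by push_cast; ring),
      zpZ_nat (2 * j + 1) _ (by push_cast; ring), zpZ_nat (2 * j) _ (by push_cast; ring),
      zp, if_pos (by omega)]
  push_cast
  rfl

/-- at a common zero, γ vanishes -/
theorem gamma_zero (φ : MvPolynomial (Fin 2) ℂ →ₐ[ℂ] ℂ) (g : ℕ) (h0 : φ (zp g) = 0)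
    (h1 : φ (zp (g + 1)) = 0) (h2 : φ (zp (g + 2)) = 0) : φ (X 1) = 0 := by
  induction g with
  | zero => simp [zp] at h0
  | succ g ih =>
    by_contra hne
    apply hne
    refine ih ?_ h0 h1
    obtain ⟨c, d, hd, h⟩ := zp_rec g
    have h' := congrArg φ h
    have e1 : φ (zp (g + 3)) = 0 := h2
    have e2 : φ (zp (g + 2)) = 0 := h1
    simp only [map_add, map_mul, e1, e2, h0, algHom_C] at h'
    simpa [hd, hne] using h'

theorem alpha_sq (φ : MvPolynomial (Fin 2) ℂ →ₐ[ℂ] ℂ) (hγ : φ (X 1) = 0) (n : ℕ)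
    (h1 : φ (zp (2 * n + 1)) = 0) : ∃ r : ℝ, 0 ≤ r ∧ φ (-(X 0) ^ 2) = (r : ℂ) := by
  induction n with
  | zero => exact ⟨0, le_rfl, by simp [zp] at h1; simp [h1]⟩
  | succ n ih =>
    obtain ⟨c, -, hA⟩ := zp_A n
    obtain ⟨c', d, -, hd, hB⟩ := zp_B n
    have hA' := congrArg φ hA
    have hB' := congrArg φ hB
    rw [zpZ_nat (2 * (n + 1) + 1) _ (by push_cast; ring)] at hB'
    simp only [map_add, map_mul, hγ, h1, algHom_C] at hA' hB'
    have e : zpZ (2 * n + 1) = zp (2 * n + 1) := zpZ_nat _ _ (by push_cast; ring)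
    rw [e] at hA' hB'
    rw [hA'] at hB'
    have : (φ (X 0) ^ 2 + (d : ℂ)) * φ (zp (2 * n + 1)) = 0 := by
      simp only [Complex.coe_algebraMap, Algebra.algebraMap_self, RingHom.id_apply] at hB'
      linear_combination -hB'
    rcases mul_eq_zero.mp this with h | h
    · refine ⟨d, hd.le, ?_⟩
      simp only [map_neg, map_pow]
      linear_combination -h
    · exact ih h

theorem main_aux (n : ℕ) (i : ℕ) (hi : i < n) :
    ∃ w x : MvPolynomial (Fin 2) ℂ ⧸ Jp (2 * n), IsUnit w ∧ IsUnit x ∧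
      w * Ideal.Quotient.mk (Jp (2 * n)) (X 1 ^ i * zpZ (2 * n - 2 * i - 1))
        = Ideal.Quotient.mk (Jp (2 * n)) (X 1 ^ (i + 1) * zpZ (2 * n - 2 * i - 2)) ∧
      (Even i → Ideal.Quotient.mk (Jp (2 * n)) (X 0) * x *
        Ideal.Quotient.mk (Jp (2 * n)) (X 1 ^ i * zpZ (2 * n - 2 * i - 1))
        = Ideal.Quotient.mk (Jp (2 * n)) (X 1 ^ (i + 1) * zpZ (2 * n - 2 * i - 3))) ∧
      (Odd i → x *
        Ideal.Quotient.mk (Jp (2 * n)) (X 1 ^ i * zpZ (2 * n - 2 * i - 1))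
        = Ideal.Quotient.mk (Jp (2 * n)) (X 0) *
          Ideal.Quotient.mk (Jp (2 * n)) (X 1 ^ (i + 1) * zpZ (2 * n - 2 * i - 3))) := by
  set q := Ideal.Quotient.mk (Jp (2 * n)) with hq
  have hC : ∀ c : ℂ, q (C c) = algebraMap ℂ (MvPolynomial (Fin 2) ℂ ⧸ Jp (2 * n)) c := fun c => rfl
  have z0 : q (zp (2 * n)) = 0 :=
    Ideal.Quotient.eq_zero_iff_mem.mpr (Ideal.subset_span (by simp))
  have z1 : q (zp (2 * n + 1)) = 0 :=
    Ideal.Quotient.eq_zero_iff_mem.mpr (Ideal.subset_span (by simp))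
  have z2 : q (zp (2 * n + 2)) = 0 :=
    Ideal.Quotient.eq_zero_iff_mem.mpr (Ideal.subset_span (by simp))
  haveI : Algebra.FiniteType ℂ (MvPolynomial (Fin 2) ℂ ⧸ Jp (2 * n)) :=
    Algebra.FiniteType.of_surjective (Ideal.Quotient.mkₐ ℂ _) (Ideal.Quotient.mkₐ_surjective ℂ _)
  have hα : NonnegPt (-(q (X 0) ^ 2)) := by
    intro φ
    have := alpha_sq (φ.comp (Ideal.Quotient.mkₐ ℂ _))
      (gamma_zero (φ.comp (Ideal.Quotient.mkₐ ℂ _)) (2 * n) ?_ ?_ ?_) n ?_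
    · simpa using this
    · show φ (q _) = 0
      rw [z0, map_zero]
    · show φ (q _) = 0
      rw [z1, map_zero]
    · show φ (q _) = 0
      rw [z2, map_zero]
    · show φ (q _) = 0
      rw [z1, map_zero]
  obtain ⟨p, rfl⟩ : ∃ p, n = p + 1 := ⟨n - 1, by omega⟩
  have key := abs_induction (q (X 0)) (q (X 1))
    (fun i => q (X 1 ^ i * zpZ (2 * (p + 1 : ℕ) - 2 * i - 1)))
    (fun i => q (X 1 ^ (i + 1) * zpZ (2 * (p + 1 : ℕ) - 2 * i - 2))) (p + 1) hα
    ?_ ?_ ?_ ?_ ?_ i hi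
  · obtain ⟨-, -, w, x, hw, hx, e1, e2, e3⟩ := key
    have e2' : ((2 * (p + 1 : ℕ) : ℤ) - 2 * (i + 1 : ℕ) - 1) = 2 * (p + 1 : ℕ) - 2 * i - 3 := by
      push_cast; ring
    simp only [e2'] at e2 e3
    rcases Nat.even_or_odd i with h | h
    · refine ⟨-w, -x, hw.isUnit.neg, hx.isUnit.neg, ?_, ?_, ?_⟩
      · rw [e1]; ring
      · intro _; rw [e2 h]; ring
      · intro h'; exact absurd h (by simpa using h')
    · refine ⟨-w, x, hw.isUnit.neg, hx.isUnit, ?_, ?_, ?_⟩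
      · rw [e1]; ring
      · intro h'; exact absurd h' (by simpa using h)
      · intro _; exact e3 h
  · -- γ ζ_{g-1} = 0
    obtain ⟨c, hc, h⟩ := zp_A (p + 1)
    have h' := congrArg q h
    rw [zpZ_nat (2 * (p + 1) + 2) _ (by push_cast; ring),
      zpZ_nat (2 * (p + 1) + 1) _ (by push_cast; ring)] at h'
    simp only [map_add, map_mul, z1, z2, hC] at h'
    obtain ⟨f, -, hf⟩ := (posPt_const (A := MvPolynomial (Fin 2) ℂ ⧸ Jp (2 * (p + 1))) hc).inv
    simp only [pow_zero, one_mul, Nat.cast_zero, mul_zero, sub_zero]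
    linear_combination -f * h' - q (X 1) * q (zpZ (2 * (p + 1 : ℕ) - 1)) * hf
  · obtain ⟨c, hc, h⟩ := zp_A p
    have h' := congrArg q h
    rw [zpZ_nat (2 * (p + 1)) _ (by push_cast; ring)] at h'
    simp only [map_add, map_mul, z0, hC] at h'
    refine ⟨_, posPt_const hc, ?_⟩
    have a1 : ((2 * (p + 1 : ℕ) : ℤ) - 2 * (0 : ℕ) - 1) = 2 * p + 1 := by push_cast; ring
    have a2 : ((2 * (p + 1 : ℕ) : ℤ) - 2 * (1 : ℕ) - 1) = 2 * p - 1 := by push_cast; ring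
    simp only [a1, a2, map_mul, map_pow]
    linear_combination -h'
  · obtain ⟨c, d, hc, hd, h⟩ := zp_B p
    have h' := congrArg q h
    rw [zpZ_nat (2 * (p + 1) + 1) _ (by push_cast; ring),
      zpZ_nat (2 * (p + 1)) (2 * p + 2) (by push_cast; ring)] at h'
    simp only [map_add, map_mul, z0, z1, hC] at h'
    refine ⟨_, _, posPt_const hc, posPt_const hd, ?_⟩
    have a1 : ((2 * (p + 1 : ℕ) : ℤ) - 2 * (0 : ℕ) - 1) = 2 * p + 1 := by push_cast; ring
    have a2 : ((2 * (p + 1 : ℕ) : ℤ) - 2 * (0 : ℕ) - 2) = 2 * p := by push_cast; ring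
    simp only [a1, a2, map_mul, map_pow]
    linear_combination -h'
  · intro i hi
    obtain ⟨j, rfl⟩ : ∃ j, p = i + 1 + j := ⟨p - (i + 1), by omega⟩
    obtain ⟨c, hc, h⟩ := zp_A j
    have h' := congrArg q h
    simp only [map_add, map_mul, hC] at h'
    refine ⟨_, posPt_const hc, ?_⟩
    have a1 : ((2 * (i + 1 + j + 1 : ℕ) : ℤ) - 2 * (i + 2 : ℕ) - 1) = 2 * j - 1 := by
      push_cast; ring
    have a2 : ((2 * (i + 1 + j + 1 : ℕ) : ℤ) - 2 * (i : ℕ) - 2) = 2 * j + 2 := by push_cast; ring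
    have a3 : ((2 * (i + 1 + j + 1 : ℕ) : ℤ) - 2 * (i + 1 : ℕ) - 1) = 2 * j + 1 := by
      push_cast; ring
    simp only [a1, a2, a3, map_mul, map_pow]
    linear_combination -q (X 1) ^ (i + 1) * h'
  · intro i hi
    obtain ⟨j, rfl⟩ : ∃ j, p = i + 1 + j := ⟨p - (i + 1), by omega⟩
    obtain ⟨c, d, hc, hd, h⟩ := zp_B j
    have h' := congrArg q h
    simp only [map_add, map_mul, hC] at h'
    refine ⟨_, _, posPt_const hc, posPt_const hd, ?_⟩
    have a1 : ((2 * (i + 1 + j + 1 : ℕ) : ℤ) - 2 * (i + 1 : ℕ) - 2) = 2 * j := by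
      push_cast; ring
    have a2 : ((2 * (i + 1 + j + 1 : ℕ) : ℤ) - 2 * (i : ℕ) - 2) = 2 * j + 2 := by push_cast; ring
    have a3 : ((2 * (i + 1 + j + 1 : ℕ) : ℤ) - 2 * (i + 1 : ℕ) - 1) = 2 * j + 1 := by
      push_cast; ring
    have a4 : ((2 * (i + 1 + j + 1 : ℕ) : ℤ) - 2 * (i : ℕ) - 1) = 2 * j + 3 := by
      push_cast; ring
    simp only [a1, a2, a3, a4, map_mul, map_pow]
    linear_combination -q (X 1) ^ (i + 1) * h'

/-- For g ≥ 0 even and i ≥ 0: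
    (i) there is a unit w mod J_g^+ with w·γ^i ζ_{g−2i−1}^+ ≡ γ^{i+1} ζ_{g−2i−2}^+ (mod J_g^+);
    (ii) there is a unit x mod J_g^+ with
         α·x·γ^i ζ_{g−2i−1}^+ ≡ γ^{i+1} ζ_{g−2i−3}^+ (mod J_g^+) if i is even, and
         x·γ^i ζ_{g−2i−1}^+ ≡ α·γ^{i+1} ζ_{g−2i−3}^+ (mod J_g^+) if i is odd. -/
theorem Jp_even_units (g : ℕ) (heven : Even g) (i : ℕ) :
    (∃ w : MvPolynomial (Fin 2) ℂ, IsUnit (Ideal.Quotient.mk (Jp g) w) ∧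
      w * (X 1 : MvPolynomial (Fin 2) ℂ) ^ i * zpZ ((g : ℤ) - 2 * i - 1)
        - (X 1 : MvPolynomial (Fin 2) ℂ) ^ (i + 1) * zpZ ((g : ℤ) - 2 * i - 2) ∈ Jp g) ∧
    (∃ x : MvPolynomial (Fin 2) ℂ, IsUnit (Ideal.Quotient.mk (Jp g) x) ∧
      ((Even i →
        (X 0 : MvPolynomial (Fin 2) ℂ) * x * (X 1 : MvPolynomial (Fin 2) ℂ) ^ i
            * zpZ ((g : ℤ) - 2 * i - 1)
          - (X 1 : MvPolynomial (Fin 2) ℂ) ^ (i + 1) * zpZ ((g : ℤ) - 2 * i - 3) ∈ Jp g) ∧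
      (Odd i →
        x * (X 1 : MvPolynomial (Fin 2) ℂ) ^ i * zpZ ((g : ℤ) - 2 * i - 1)
          - (X 0 : MvPolynomial (Fin 2) ℂ) * (X 1 : MvPolynomial (Fin 2) ℂ) ^ (i + 1)
            * zpZ ((g : ℤ) - 2 * i - 3) ∈ Jp g))) := by
  obtain ⟨n, rfl⟩ := heven.two_dvd
  by_cases hi : i < n
  · obtain ⟨w, x, hw, hx, e1, e2, e3⟩ := main_aux n i hi
    obtain ⟨w, rfl⟩ := Ideal.Quotient.mk_surjective w
    obtain ⟨x, rfl⟩ := Ideal.Quotient.mk_surjective x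
    have hg : ((2 * n : ℕ) : ℤ) = 2 * n := by push_cast; ring
    rw [hg]
    refine ⟨⟨w, hw, ?_⟩, ⟨x, hx, ?_, ?_⟩⟩
    · rw [← Ideal.Quotient.eq, mul_assoc, map_mul, e1]
    · intro h
      rw [← Ideal.Quotient.eq, mul_assoc, map_mul, map_mul, e2 h]
    · intro h
      rw [← Ideal.Quotient.eq, mul_assoc, map_mul, e3 h, mul_assoc, ← map_mul]
  · have h1 : zpZ (((2 * n : ℕ) : ℤ) - 2 * i - 1) = 0 := zpZ_neg _ (by push_cast; omega)
    have h2 : zpZ (((2 * n : ℕ) : ℤ) - 2 * i - 2) = 0 := zpZ_neg _ (by push_cast; omega)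
    have h3 : zpZ (((2 * n : ℕ) : ℤ) - 2 * i - 3) = 0 := zpZ_neg _ (by push_cast; omega)
    rw [h1, h2, h3]
    exact ⟨⟨1, by simp, by simp⟩, ⟨1, by simp, by simp, by simp⟩⟩
end
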